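/- (Hyperbolic cosine, Fourier transform identity.) For every z ∈ ℝ, ∫_ℝ e^{izx} · x/(e^x − e^{−x}) dx = (π²/4) · (1/cosh(πz/2))², where the integrand is given its continuous value 1/2 at x = 0. -/

import Mathlib

open MeasureTheory

/-!
The kernel `x / (e^x - e^{-x})` is even and equals `∑ₙ |x| e^{-(2n+1)|x|}`. Integrating termwise
against `e^{sx}`, which is legitimate for `|Re s| < 1`, gives
`∑ₙ (1 / (2n+1+s)^2 + 1 / (2n+1-s)^2)`. With `w = (1+s)/2` this is `1/4 ∑ 1 / (w+k)^2` over all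
integers `k`, and differentiating the partial fractions of the cotangent sums it to
`π^2 / (4 sin^2 (π w)) = π^2 / (4 cos^2 (π s / 2))`. Finally put `s = i z`.
-/

open Set Filter Topology Complex

theorem tendstoLocallyUniformlyOn_logDeriv {ι : Type*} {p : Filter ι} [p.NeBot] {f : ι → ℂ → ℂ}
    {g : ℂ → ℂ} {s : Set ℂ} (hs : IsOpen s) (hfg : TendstoLocallyUniformlyOn f g p s)
    (hf : ∀ᶠ i in p, DifferentiableOn ℂ (f i) s) (hg : ∀ x ∈ s, g x ≠ 0) :
    TendstoLocallyUniformlyOn (fun i ↦ logDeriv (f i)) (logDeriv g) p s := by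
  have hg' : DifferentiableOn ℂ g s := hfg.differentiableOn hf hs
  exact (hfg.deriv hf hs).div₀ hfg (hg'.deriv hs).continuousOn hg'.continuousOn hg

theorem tendstoLocallyUniformlyOn_sum_cotTerm :
    TendstoLocallyUniformlyOn (fun (n : ℕ) (w : ℂ) ↦ ∑ j ∈ Finset.range n, cotTerm w j)
      (fun w ↦ Real.pi * cot (Real.pi * w) - 1 / w) atTop integerComplement := by
  refine ((tendstoLocallyUniformlyOn_logDeriv isOpen_compl_range_intCast
    HasProdLocallyUniformlyOn_euler_sin_prod.tendstoLocallyUniformlyOn_finsetRange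
    (.of_forall fun n ↦ by fun_prop) fun w hw ↦ ?_).congr
      fun n w hw ↦ logDeriv_prod_sineTerm_eq_sum_cotTerm hw n).congr_right
      fun w hw ↦ logDeriv_sin_div_eq_cot hw
  exact div_ne_zero (sin_pi_mul_ne_zero hw)
    (mul_ne_zero (ofReal_ne_zero.2 Real.pi_ne_zero) (integerComplement.ne_zero hw))

theorem hasDerivAt_cot {w : ℂ} (hw : sin w ≠ 0) : HasDerivAt cot (-(1 / sin w ^ 2)) w := by
  convert! (hasDerivAt_cos w).div (hasDerivAt_sin w) hw using 1
  rw [← sin_sq_add_cos_sq w]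
  ring

theorem hasDerivAt_one_div_add_const {𝕜 : Type*} [NontriviallyNormedField 𝕜] {w a : 𝕜}
    (h : w + a ≠ 0) :
    HasDerivAt (fun z ↦ 1 / (z + a)) (-(1 / (w + a) ^ 2)) w := by
  simpa [one_div, neg_div] using ((hasDerivAt_id w).add_const a).fun_inv h

theorem hasDerivAt_cotTerm {w : ℂ} (hw : w ∈ integerComplement) (j : ℕ) :
    HasDerivAt (fun z ↦ cotTerm z j)
      (-(1 / (w + (j + 1)) ^ 2 + 1 / (w - (j + 1)) ^ 2)) w := by
  have hadd : w + (j + 1) ≠ 0 := mod_cast integerComplement_add_ne_zero hw (j + 1)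
  have hsub : w + -(j + 1) ≠ 0 := mod_cast integerComplement_add_ne_zero hw (-(j + 1))
  convert! (hasDerivAt_one_div_add_const hsub).add (hasDerivAt_one_div_add_const hadd) using 1
  ring

theorem tendsto_sum_one_div_add_sq_add_one_div_sub_sq {w : ℂ} (hw : w ∈ integerComplement) :
    Tendsto (fun n : ℕ ↦ ∑ j ∈ Finset.range n, (1 / (w + (j + 1)) ^ 2 + 1 / (w - (j + 1)) ^ 2))
      atTop (𝓝 (Real.pi ^ 2 / sin (Real.pi * w) ^ 2 - 1 / w ^ 2)) := by
  have hderiv_sum (n : ℕ) : deriv (fun z ↦ ∑ j ∈ Finset.range n, cotTerm z j) w =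
      -∑ j ∈ Finset.range n, (1 / (w + (j + 1)) ^ 2 + 1 / (w - (j + 1)) ^ 2) := by
    rw [← Finset.sum_neg_distrib]
    exact (HasDerivAt.fun_sum fun j _ ↦ hasDerivAt_cotTerm hw j).deriv
  have hderiv_limit : deriv (fun z ↦ Real.pi * cot (Real.pi * z) - 1 / z) w =
      -(Real.pi ^ 2 / sin (Real.pi * w) ^ 2 - 1 / w ^ 2) := by
    have hcot : HasDerivAt (fun z : ℂ ↦ Real.pi * cot (Real.pi * z)) _ w :=
      ((hasDerivAt_cot (sin_pi_mul_ne_zero hw)).comp w (hasDerivAt_const_mul _)).const_mul _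
    have hinv : HasDerivAt (fun z : ℂ ↦ 1 / z) (-(1 / w ^ 2)) w := by
      simpa using hasDerivAt_inv (integerComplement.ne_zero hw)
    rw [(hcot.fun_sub hinv).deriv]
    ring
  have hdiff (n : ℕ) :
      DifferentiableOn ℂ (fun z ↦ ∑ j ∈ Finset.range n, cotTerm z j) integerComplement :=
    .fun_sum fun j _ z hz ↦ (hasDerivAt_cotTerm hz j).differentiableAt.differentiableWithinAt
  have hlim := (tendstoLocallyUniformlyOn_sum_cotTerm.deriv (.of_forall hdiff)
    isOpen_compl_range_intCast).tendsto_at hw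
  simpa only [Function.comp_apply, hderiv_sum, hderiv_limit, neg_neg] using hlim.neg

theorem summable_one_div_add_int_sq (w : ℂ) : Summable fun n : ℤ ↦ 1 / (w + n) ^ 2 := by
  simpa using EisensteinSeries.linear_right_summable w 1 (k := 2) le_rfl

theorem hasSum_int_one_div_add_sq {w : ℂ} (hw : w ∈ integerComplement) :
    HasSum (fun n : ℤ ↦ 1 / (w + n) ^ 2) (Real.pi ^ 2 / sin (Real.pi * w) ^ 2) := by
  have hsum := summable_one_div_add_int_sq w
  have hpairs : HasSum (fun j : ℕ ↦ 1 / (w + (j + 1)) ^ 2 + 1 / (w - (j + 1)) ^ 2)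
      (∑' n : ℤ, 1 / (w + n) ^ 2 - 1 / w ^ 2) := by
    simpa [sub_eq_add_neg] using (hasSum_nat_add_iff' 1).2 hsum.hasSum.nat_add_neg
  exact hsum.hasSum_iff.2
    (sub_left_injective (tendsto_nhds_unique hpairs.tendsto_sum_nat
      (tendsto_sum_one_div_add_sq_add_one_div_sub_sq hw)))

theorem hasSum_one_div_odd_add_sq_add_odd_sub_sq {s : ℂ}
    (hs : (1 + s) / 2 ∈ integerComplement) :
    HasSum (fun n : ℕ ↦ 1 / (2 * n + 1 + s) ^ 2 + 1 / (2 * n + 1 - s) ^ 2)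
      (Real.pi ^ 2 / 4 * (1 / cos (Real.pi * s / 2)) ^ 2) := by
  convert! (hasSum_int_one_div_add_sq hs).nat_add_neg_add_one.mul_left (1 / 4) using 1
  · ext n
    have hpos : (1 + s) / 2 + ((n : ℤ) : ℂ) = (2 * n + 1 + s) / 2 := by push_cast; ring
    have hneg : (1 + s) / 2 + ((-(n + 1) : ℤ) : ℂ) = -((2 * n + 1 - s) / 2) := by push_cast; ring
    rw [hpos, hneg, neg_sq, div_pow, div_pow, one_div_div, one_div_div]
    ring
  · have hsin : sin (Real.pi * ((1 + s) / 2)) = cos (Real.pi * s / 2) := by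
      rw [← sin_add_pi_div_two]
      ring_nf
    rw [hsin]
    ring

theorem one_add_div_two_mem_integerComplement {s : ℂ} (hs : |s.re| < 1) :
    (1 + s) / 2 ∈ integerComplement := by
  rintro ⟨n, hn⟩
  have hre : (n : ℝ) = (1 + s.re) / 2 := by simpa using congrArg re hn
  rw [abs_lt] at hs
  have h0 : (0 : ℝ) < n := by linarith
  have h1 : (n : ℝ) < 1 := by linarith
  norm_cast at h0 h1
  lia

theorem integrableOn_ofReal_mul_cexp_neg_mul {a : ℂ} (ha : 0 < a.re) :
    IntegrableOn (fun x : ℝ ↦ x * cexp (-(a * x))) (Ioi 0) := by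
  have hreal : IntegrableOn (fun x : ℝ ↦ x * Real.exp (-(a.re * x))) (Ioi 0) := by
    simpa using integrableOn_rpow_mul_exp_neg_mul_rpow (s := 1) (by norm_num) one_pos ha
  refine Integrable.mono hreal (by fun_prop) (.of_forall fun x ↦ ?_)
  simp [norm_exp]

theorem tendsto_pow_mul_cexp_neg_mul_atTop {a : ℂ} (ha : 0 < a.re) (n : ℕ) :
    Tendsto (fun x : ℝ ↦ (x : ℂ) ^ n * cexp (-(a * x))) atTop (𝓝 0) := by
  rw [tendsto_zero_iff_norm_tendsto_zero]
  simpa [norm_exp] using (tendsto_rpow_mul_exp_neg_mul_atTop_nhds_zero n a.re ha).norm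

theorem integral_Ioi_ofReal_mul_cexp_neg_mul {a : ℂ} (ha : 0 < a.re) :
    ∫ x : ℝ in Ioi 0, x * cexp (-(a * x)) = 1 / a ^ 2 := by
  have ha0 : a ≠ 0 := by rintro rfl; simp at ha
  have hderiv (x : ℝ) :
      HasDerivAt (fun x : ℝ ↦ -(x / a + 1 / a ^ 2) * cexp (-(a * x))) (x * cexp (-(a * x))) x := by
    have hlin : HasDerivAt (fun z : ℂ ↦ -(z / a + 1 / a ^ 2)) (-(1 / a)) x :=
      (((hasDerivAt_id _).div_const a).add_const _).fun_neg
    have hexp : HasDerivAt (fun z : ℂ ↦ cexp (-(a * z))) (cexp (-(a * x)) * -a) x :=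
      (hasDerivAt_const_mul a).fun_neg.cexp
    convert! (hlin.mul hexp).comp_ofReal using 1
    field_simp
    ring
  have hlim : Tendsto (fun x : ℝ ↦ -(x / a + 1 / a ^ 2) * cexp (-(a * x))) atTop (𝓝 0) := by
    have h := ((tendsto_pow_mul_cexp_neg_mul_atTop ha 1).const_mul (-(1 / a))).add
      ((tendsto_pow_mul_cexp_neg_mul_atTop ha 0).const_mul (-(1 / a ^ 2)))
    simp only [mul_zero, add_zero] at h
    exact h.congr fun x ↦ by ring
  rw [integral_Ioi_of_hasDerivAt_of_tendsto' (fun x _ ↦ hderiv x)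
    (integrableOn_ofReal_mul_cexp_neg_mul ha) hlim]
  simp

theorem integrable_of_integrableOn_Ioi_of_comp_neg {E : Type*} [NormedAddCommGroup E]
    {f : ℝ → E} (hf : IntegrableOn f (Ioi 0)) (hf_neg : IntegrableOn (fun x ↦ f (-x)) (Ioi 0)) :
    Integrable f := by
  have hneg : IntegrableOn f (Iic 0) := by
    rw [integrableOn_Iic_iff_integrableOn_Iio]
    simpa using hf_neg.comp_neg
  simpa using hneg.union hf

theorem integral_eq_integral_Ioi_add_integral_Ioi_comp_neg {E : Type*} [NormedAddCommGroup E]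
    [NormedSpace ℝ E] {f : ℝ → E} (hf : Integrable f) :
    ∫ x, f x = (∫ x in Ioi 0, f x) + ∫ x in Ioi 0, f (-x) := by
  rw [integral_comp_neg_Ioi, neg_zero, add_comm,
    intervalIntegral.integral_Iic_add_Ioi hf.integrableOn hf.integrableOn]

section TwoSidedExponential

variable (a s : ℂ)

theorem eqOn_Ioi_abs_mul_cexp :
    EqOn (fun x : ℝ ↦ |x| * cexp (s * x - a * |x|)) (fun x ↦ x * cexp (-((a - s) * x)))
      (Ioi 0) := by
  intro x hx
  simp only [abs_of_pos (mem_Ioi.1 hx)]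
  ring_nf

theorem eqOn_Ioi_abs_mul_cexp_comp_neg :
    EqOn (fun x : ℝ ↦ |-x| * cexp (s * (-x : ℝ) - a * |-x|)) (fun x ↦ x * cexp (-((a + s) * x)))
      (Ioi 0) := by
  intro x hx
  simp only [abs_neg, abs_of_pos (mem_Ioi.1 hx), ofReal_neg]
  ring_nf

variable {a s}

theorem integrable_abs_mul_cexp (h : |s.re| < a.re) :
    Integrable fun x : ℝ ↦ |x| * cexp (s * x - a * |x|) := by
  obtain ⟨hneg, hpos⟩ := abs_lt.1 h
  apply integrable_of_integrableOn_Ioi_of_comp_neg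
  · rw [integrableOn_congr_fun (eqOn_Ioi_abs_mul_cexp a s) measurableSet_Ioi]
    exact integrableOn_ofReal_mul_cexp_neg_mul (by simpa using hpos)
  · rw [integrableOn_congr_fun (eqOn_Ioi_abs_mul_cexp_comp_neg a s) measurableSet_Ioi]
    exact integrableOn_ofReal_mul_cexp_neg_mul (by rw [add_re]; linarith)

theorem integral_abs_mul_cexp (h : |s.re| < a.re) :
    ∫ x : ℝ, |x| * cexp (s * x - a * |x|) = 1 / (a + s) ^ 2 + 1 / (a - s) ^ 2 := by
  obtain ⟨hneg, hpos⟩ := abs_lt.1 h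
  rw [integral_eq_integral_Ioi_add_integral_Ioi_comp_neg (integrable_abs_mul_cexp h),
    setIntegral_congr_fun measurableSet_Ioi (eqOn_Ioi_abs_mul_cexp a s),
    setIntegral_congr_fun measurableSet_Ioi (eqOn_Ioi_abs_mul_cexp_comp_neg a s),
    integral_Ioi_ofReal_mul_cexp_neg_mul (by simpa using hpos),
    integral_Ioi_ofReal_mul_cexp_neg_mul (by rw [add_re]; linarith), add_comm]

theorem integral_norm_abs_mul_cexp (h : |s.re| < a.re) :
    ∫ x : ℝ, ‖|x| * cexp (s * x - a * |x|)‖ =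
      1 / (a.re + s.re) ^ 2 + 1 / (a.re - s.re) ^ 2 := by
  apply ofReal_injective
  rw [← integral_complex_ofReal]
  simpa [norm_exp] using integral_abs_mul_cexp (a := a.re) (s := s.re) (by simpa using h)

end TwoSidedExponential

-- At `x = 0` both sides vanish, the right-hand one through `0 / 0 = 0`.
theorem hasSum_abs_mul_exp_neg_odd_mul_abs (x : ℝ) :
    HasSum (fun n : ℕ ↦ |x| * Real.exp (-((2 * n + 1) * |x|)))
      (x / (Real.exp x - Real.exp (-x))) := by
  have heven : x / (Real.exp x - Real.exp (-x)) = |x| / (Real.exp |x| - Real.exp (-|x|)) := by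
    rcases abs_choice x with h | h <;> rw [h]
    rw [neg_neg, ← neg_sub (Real.exp x), neg_div_neg_eq]
  rw [heven]
  rcases (abs_nonneg x).eq_or_lt with hx | hx
  · simp [← hx]
  generalize |x| = y at hx ⊢
  have hlt : Real.exp (-2 * y) < 1 := Real.exp_lt_one_iff.2 (by linarith)
  convert! (hasSum_geometric_of_lt_one (Real.exp_nonneg _) hlt).mul_left (y * Real.exp (-y)) using 1
  · ext n
    rw [← Real.exp_nat_mul, mul_assoc, ← Real.exp_add]
    ring_nf
  · have hfactor : Real.exp y - Real.exp (-y) = Real.exp y * (1 - Real.exp (-2 * y)) := by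
      rw [mul_sub, ← Real.exp_add]
      ring_nf
    rw [hfactor, Real.exp_neg, ← div_eq_mul_inv, ← div_eq_mul_inv, div_div]

theorem hasSum_abs_mul_cexp_odd (s : ℂ) (x : ℝ) :
    HasSum (fun n : ℕ ↦ |x| * cexp (s * x - (2 * n + 1) * |x|))
      (cexp (s * x) * (x / (Real.exp x - Real.exp (-x)) : ℝ)) := by
  convert! (hasSum_ofReal.2 (hasSum_abs_mul_exp_neg_odd_mul_abs x)).mul_left (cexp (s * x)) using 1
  ext n
  push_cast
  rw [sub_eq_add_neg, exp_add]
  ring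

theorem hasSum_integral_cexp_mul_div_exp_sub_exp_neg {s : ℂ} (hs : |s.re| < 1) :
    HasSum (fun n : ℕ ↦ 1 / (2 * n + 1 + s) ^ 2 + 1 / (2 * n + 1 - s) ^ 2)
      (∫ x : ℝ, cexp (s * x) * (x / (Real.exp x - Real.exp (-x)) : ℝ)) := by
  have hre (n : ℕ) : |s.re| < (2 * n + 1 : ℂ).re := by
    have hn : (1 : ℝ) ≤ 2 * n + 1 := by linarith [n.cast_nonneg (α := ℝ)]
    simpa using hs.trans_le hn
  have hnorm : Summable fun n : ℕ ↦ ∫ x : ℝ, ‖|x| * cexp (s * x - (2 * n + 1) * |x|)‖ := by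
    have hsre : |(s.re : ℂ).re| < 1 := by simpa using hs
    simp only [integral_norm_abs_mul_cexp (hre _)]
    rw [← summable_ofReal]
    simpa using
      (hasSum_one_div_odd_add_sq_add_odd_sub_sq
        (one_add_div_two_mem_integerComplement hsre)).summable
  simpa only [(hasSum_abs_mul_cexp_odd s _).tsum_eq, integral_abs_mul_cexp (hre _)] using
    hasSum_integral_of_summable_integral_norm (fun n ↦ integrable_abs_mul_cexp (hre n)) hnorm

theorem integral_cexp_mul_div_exp_sub_exp_neg {s : ℂ} (hs : |s.re| < 1) :
    ∫ x : ℝ, cexp (s * x) * (x / (Real.exp x - Real.exp (-x)) : ℝ) =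
      Real.pi ^ 2 / 4 * (1 / cos (Real.pi * s / 2)) ^ 2 :=
  (hasSum_integral_cexp_mul_div_exp_sub_exp_neg hs).unique
    (hasSum_one_div_odd_add_sq_add_odd_sub_sq (one_add_div_two_mem_integerComplement hs))

theorem statement14_general {z : ℂ} (hz : |z.im| < 1) :
    ∫ x : ℝ, cexp (I * z * x) *
        ((if x = 0 then 1 / 2 else x / (Real.exp x - Real.exp (-x)) : ℝ) : ℂ) =
      Real.pi ^ 2 / 4 * (1 / cosh (Real.pi * z / 2)) ^ 2 := by
  have hcos : cos (Real.pi * (I * z) / 2) = cosh (Real.pi * z / 2) := by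
    rw [← cos_mul_I]
    ring_nf
  rw [← hcos, ← integral_cexp_mul_div_exp_sub_exp_neg (by simpa using hz)]
  refine integral_congr_ae ?_
  filter_upwards [Measure.ae_ne volume (0 : ℝ)] with x hx
  rw [if_neg hx]

/-- **hyperbolic cosine, Fourier transform identity.** For every `z ∈ ℝ`,
`∫_ℝ e^{izx} · x/(e^x − e^{−x}) dx = (π²/4) · (1/cosh(πz/2))²`, the integrand taking its
continuous value `1/2` at `x = 0`. -/
theorem statement14 :
    ∀ z : ℝ,
      (∫ x : ℝ, Complex.exp (Complex.I * (z : ℂ) * (x : ℂ)) *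
          ((if x = 0 then 1 / 2 else x / (Real.exp x - Real.exp (-x)) : ℝ) : ℂ))
        = ((Real.pi ^ 2 / 4 * (1 / Real.cosh (Real.pi * z / 2)) ^ 2 : ℝ) : ℂ) := by
  intro z
  exact_mod_cast statement14_general (z := z) (by simp)
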